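/- arXiv:2111.12906 — 2 statements merged into one kernel-verified Lean document; each statement's English description precedes it below -/
import Mathlib

section
/- Let Λ ∈ ℝ^{n×n} be symmetric positive semidefinite, W ∈ ℝ^{n×d}, p > 0, ν ∈ ℝ, and m ∈ ℝ. If 1/2 + |m|·‖Λ‖₂·‖W‖₂ ≤ p·‖W‖_i²·‖Λ‖_i − ν, then p·WᵀΛW − νI is positive definite (hence invertible) and ‖(p·WᵀΛW − νI)^{-1} ((1/2)Iᵀ − mWᵀΛ)‖₂ ≤ 1. -/
open Matrix BigOperators

/-- Euclidean norm of a vector. -/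
noncomputable def vnorm {k : ℕ} (v : Fin k → ℝ) : ℝ := Real.sqrt (v ⬝ᵥ v)

/-- Spectral norm of a matrix: the largest singular value, i.e. the supremum of ‖Ax‖
over unit vectors x. -/
noncomputable def spNorm {n d : ℕ} (A : Matrix (Fin n) (Fin d) ℝ) : ℝ :=
  sSup {c | ∃ x : Fin d → ℝ, vnorm x = 1 ∧ c = vnorm (A *ᵥ x)}

/-- Infimum norm of a matrix: the smallest singular value (square root of the smallest
eigenvalue of AᵀA), i.e. the infimum of ‖Ax‖ over unit vectors x. -/
noncomputable def infNorm {n d : ℕ} (A : Matrix (Fin n) (Fin d) ℝ) : ℝ :=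
  sInf {c | ∃ x : Fin d → ℝ, vnorm x = 1 ∧ c = vnorm (A *ᵥ x)}

/-- The rectangular identity block. -/
def rectId (n d : ℕ) : Matrix (Fin n) (Fin d) ℝ :=
  Matrix.of fun i j => if (i : ℕ) = (j : ℕ) then 1 else 0

/-! With `K = 1 / 2 + |m| ‖Λ‖₂ ‖W‖₂`, the hypothesis gives `K • 1 ≤ p WᵀΛW - ν I` in the Loewner
order, because `‖Λ‖ᵢ • 1 ≤ Λ` and `‖W‖ᵢ² • 1 ≤ WᵀW`. So this matrix is positive definite with
inverse of norm at most `K⁻¹`, while the triangle inequality bounds `‖½ Iᵀ - m WᵀΛ‖₂` by `K`. -/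

open WithLp
open scoped ComplexOrder MatrixOrder Matrix.Norms.L2Operator

section LoewnerOrder

variable {𝕜 m n : Type*} [RCLike 𝕜] [Fintype m] [DecidableEq n]

theorem posDef_of_smul_one_le [Finite n] {M : Matrix n n 𝕜} {c : ℝ} (hc : 0 < c) (hM : c • 1 ≤ M) :
    M.PosDef := by
  simpa using (PosDef.one.smul hc).add_posSemidef (le_iff.1 hM)

theorem mul_smul_one_le_conjTranspose_mul_mul [DecidableEq m] [Finite n] {A : Matrix m m 𝕜}
    {B : Matrix m n 𝕜} {a b : ℝ} (ha : 0 ≤ a) (hA : a • 1 ≤ A) (hB : b • 1 ≤ Bᴴ * B) :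
    (a * b) • 1 ≤ Bᴴ * A * B := by
  have hsplit : Bᴴ * A * B - (a * b) • 1 = Bᴴ * (A - a • 1) * B + a • (Bᴴ * B - b • 1) := by
    simp [Matrix.mul_sub, Matrix.sub_mul, smul_sub, mul_smul]
  rw [le_iff, hsplit]
  exact ((le_iff.1 hA).conjTranspose_mul_mul_same B).add ((le_iff.1 hB).smul ha)

theorem star_dotProduct_self_eq_norm_toLp_sq (x : m → 𝕜) :
    star x ⬝ᵥ x = ((‖toLp 2 x‖ ^ 2 : ℝ) : 𝕜) := by
  rw [dotProduct_comm, ← EuclideanSpace.inner_toLp_toLp, inner_self_eq_norm_sq_to_K]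
  norm_cast

variable [Fintype n]

theorem mul_norm_toLp_le_norm_toLp_mulVec {M : Matrix n n 𝕜} {c : ℝ} (hM : c • 1 ≤ M)
    (x : n → 𝕜) : c * ‖toLp 2 x‖ ≤ ‖toLp 2 (M *ᵥ x)‖ := by
  have hquad : c * ‖toLp 2 x‖ ^ 2 ≤ RCLike.re (star x ⬝ᵥ M *ᵥ x) := by
    have hnonneg := (le_iff.1 hM).re_dotProduct_nonneg x
    rw [sub_mulVec, dotProduct_sub, map_sub, smul_mulVec, one_mulVec, dotProduct_smul,
      RCLike.smul_re, star_dotProduct_self_eq_norm_toLp_sq, RCLike.ofReal_re] at hnonneg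
    linarith
  have hcauchy : RCLike.re (star x ⬝ᵥ M *ᵥ x) ≤ ‖toLp 2 x‖ * ‖toLp 2 (M *ᵥ x)‖ := by
    rw [dotProduct_comm, ← EuclideanSpace.inner_toLp_toLp]
    exact re_inner_le_norm _ _
  rcases (norm_nonneg (toLp 2 x)).eq_or_lt with hx | hx
  · simp [← hx]
  · refine le_of_mul_le_mul_left ?_ hx
    linarith

theorem l2_opNorm_inv_le_inv {M : Matrix n n 𝕜} {c : ℝ} (hc : 0 < c) (hM : c • 1 ≤ M) :
    ‖M⁻¹‖ ≤ c⁻¹ := by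
  rw [l2_opNorm_def]
  refine ContinuousLinearMap.opNorm_le_bound _ (inv_nonneg.2 hc.le) fun y ↦ ?_
  have hMy : M *ᵥ M⁻¹ *ᵥ ofLp y = ofLp y := by
    rw [mulVec_mulVec, M.mul_nonsing_inv ((M.isUnit_iff_isUnit_det).1
      (posDef_of_smul_one_le hc hM).isUnit), one_mulVec]
  have hbound := mul_norm_toLp_le_norm_toLp_mulVec hM (M⁻¹ *ᵥ ofLp y)
  rw [hMy] at hbound
  exact (le_inv_mul_iff₀ hc).2 hbound

theorem sq_smul_one_le_conjTranspose_mul_self {A : Matrix m n 𝕜} {c : ℝ} (hc : 0 ≤ c)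
    (hA : ∀ x : n → 𝕜, c * ‖toLp 2 x‖ ≤ ‖toLp 2 (A *ᵥ x)‖) :
    c ^ 2 • (1 : Matrix n n 𝕜) ≤ Aᴴ * A := by
  have hherm : (Aᴴ * A - c ^ 2 • (1 : Matrix n n 𝕜)).IsHermitian :=
    (isHermitian_conjTranspose_mul_self A).sub (by simp [IsHermitian])
  refine le_iff.2 (.of_dotProduct_mulVec_nonneg hherm fun x ↦ ?_)
  have hquad : star x ⬝ᵥ (Aᴴ * A - c ^ 2 • 1) *ᵥ x =
      ((‖toLp 2 (A *ᵥ x)‖ ^ 2 - c ^ 2 * ‖toLp 2 x‖ ^ 2 : ℝ) : 𝕜) := by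
    rw [sub_mulVec, dotProduct_sub, ← mulVec_mulVec, dotProduct_mulVec, ← star_mulVec,
      smul_mulVec, one_mulVec, dotProduct_smul, star_dotProduct_self_eq_norm_toLp_sq,
      star_dotProduct_self_eq_norm_toLp_sq, RCLike.real_smul_ofReal]
    norm_cast
  rw [hquad, RCLike.ofReal_nonneg, sub_nonneg, ← mul_pow]
  gcongr
  exact hA x

end LoewnerOrder

section SpectralNorm

variable {n d : ℕ}

theorem vnorm_eq_norm_toLp (v : Fin n → ℝ) : vnorm v = ‖toLp 2 v‖ := by
  simp [vnorm, EuclideanSpace.norm_eq, dotProduct, sq]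

theorem spNorm_eq_l2_opNorm (A : Matrix (Fin n) (Fin d) ℝ) : spNorm A = ‖A‖ := by
  rw [l2_opNorm_def, ← ContinuousLinearMap.sSup_sphere_eq_norm, spNorm]
  congr 1
  ext c
  simp only [vnorm_eq_norm_toLp, Set.mem_ofPred_eq, Set.mem_image, mem_sphere_zero_iff_norm]
  exact ⟨fun ⟨x, hx, hc⟩ ↦ ⟨toLp 2 x, hx, hc.symm⟩, fun ⟨x, hx, hc⟩ ↦ ⟨ofLp x, hx, hc.symm⟩⟩

theorem transpose_mul_self_rectId (n d : ℕ) :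
    (rectId n d)ᵀ * rectId n d = diagonal fun j : Fin d ↦ if (j : ℕ) < n then 1 else 0 := by
  ext j k
  simp only [mul_apply, transpose_apply, rectId, of_apply, diagonal_apply, Fin.ext_iff]
  rcases lt_or_ge (j : ℕ) n with hj | hj
  · rw [Finset.sum_eq_single ⟨j, hj⟩] <;> grind
  · rw [Finset.sum_eq_zero] <;> grind

theorem l2_opNorm_rectId_le_one (n d : ℕ) : ‖rectId n d‖ ≤ 1 := by
  have hsq : ‖rectId n d‖ * ‖rectId n d‖ ≤ 1 := by
    rw [← l2_opNorm_conjTranspose_mul_self, conjTranspose_eq_transpose_of_trivial,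
      transpose_mul_self_rectId, l2_opNorm_diagonal, pi_norm_le_iff_of_nonneg zero_le_one]
    intro j
    split_ifs <;> simp
  nlinarith [norm_nonneg (rectId n d)]

theorem l2_opNorm_smul_rectId_sub_le (Λ : Matrix (Fin n) (Fin n) ℝ) (W : Matrix (Fin n) (Fin d) ℝ)
    (c m : ℝ) :
    ‖c • (rectId n d)ᵀ - m • (Wᵀ * Λ)‖ ≤ |c| + |m| * ‖Λ‖ * ‖W‖ := by
  have transpose_norm (B : Matrix (Fin n) (Fin d) ℝ) : ‖Bᵀ‖ = ‖B‖ := by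
    rw [← conjTranspose_eq_transpose_of_trivial, l2_opNorm_conjTranspose]
  calc ‖c • (rectId n d)ᵀ - m • (Wᵀ * Λ)‖
      ≤ |c| * ‖(rectId n d)ᵀ‖ + |m| * ‖Wᵀ * Λ‖ := by
        simpa only [norm_smul, Real.norm_eq_abs] using
          norm_sub_le (c • (rectId n d)ᵀ) (m • (Wᵀ * Λ))
    _ ≤ |c| * 1 + |m| * (‖Wᵀ‖ * ‖Λ‖) := by
        gcongr
        · exact (transpose_norm _).trans_le (l2_opNorm_rectId_le_one n d)
        · exact l2_opNorm_mul _ _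
    _ = |c| + |m| * ‖Λ‖ * ‖W‖ := by rw [transpose_norm]; ring

end SpectralNorm

section InfimumNorm

variable {n d : ℕ}

theorem infNorm_nonneg (A : Matrix (Fin n) (Fin d) ℝ) : 0 ≤ infNorm A := by
  refine Real.sInf_nonneg ?_
  rintro _ ⟨x, -, rfl⟩
  exact Real.sqrt_nonneg _

theorem infNorm_le_vnorm_mulVec (A : Matrix (Fin n) (Fin d) ℝ) {x : Fin d → ℝ}
    (hx : vnorm x = 1) : infNorm A ≤ vnorm (A *ᵥ x) := by
  refine csInf_le ⟨0, ?_⟩ ⟨x, hx, rfl⟩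
  rintro _ ⟨y, -, rfl⟩
  exact Real.sqrt_nonneg _

theorem infNorm_mul_norm_toLp_le (A : Matrix (Fin n) (Fin d) ℝ) (x : Fin d → ℝ) :
    infNorm A * ‖toLp 2 x‖ ≤ ‖toLp 2 (A *ᵥ x)‖ := by
  rcases (norm_nonneg (toLp 2 x)).eq_or_lt with hx | hx
  · simp [← hx]
  · have hunit : vnorm (‖toLp 2 x‖⁻¹ • x) = 1 := by
      rw [vnorm_eq_norm_toLp, toLp_smul, norm_smul, norm_inv, norm_norm, inv_mul_cancel₀ hx.ne']
    have hle := infNorm_le_vnorm_mulVec A hunit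
    rw [vnorm_eq_norm_toLp, mulVec_smul, toLp_smul, norm_smul, norm_inv, norm_norm,
      le_inv_mul_iff₀ hx] at hle
    rwa [mul_comm]

theorem infNorm_sq_smul_one_le_transpose_mul_self (A : Matrix (Fin n) (Fin d) ℝ) :
    infNorm A ^ 2 • (1 : Matrix (Fin d) (Fin d) ℝ) ≤ Aᵀ * A :=
  sq_smul_one_le_conjTranspose_mul_self (infNorm_nonneg A) (infNorm_mul_norm_toLp_le A)

theorem infNorm_smul_one_le {A : Matrix (Fin n) (Fin n) ℝ} (hA : A.PosSemidef) :
    infNorm A • 1 ≤ A := by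
  rw [← Algebra.algebraMap_eq_smul_one]
  refine algebraMap_le_of_le_spectrum ?_ hA.isHermitian.isSelfAdjoint
  rw [hA.isHermitian.spectrum_real_eq_range_eigenvalues, Set.forall_mem_range]
  intro i
  have hunit : vnorm (hA.isHermitian.eigenvectorBasis i) = 1 := by
    rw [vnorm_eq_norm_toLp]
    exact hA.isHermitian.eigenvectorBasis.orthonormal.1 i
  calc infNorm A ≤ vnorm (A *ᵥ hA.isHermitian.eigenvectorBasis i) :=
        infNorm_le_vnorm_mulVec A hunit
    _ = hA.isHermitian.eigenvalues i := by
      rw [hA.isHermitian.mulVec_eigenvectorBasis, vnorm_eq_norm_toLp, toLp_smul, norm_smul,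
        ← vnorm_eq_norm_toLp, hunit, mul_one, Real.norm_of_nonneg (hA.eigenvalues_nonneg i)]

theorem smul_one_le_smul_transpose_mul_mul_sub {Λ : Matrix (Fin n) (Fin n) ℝ} (hΛ : Λ.PosSemidef)
    (W : Matrix (Fin n) (Fin d) ℝ) {p : ℝ} (hp : 0 ≤ p) (ν : ℝ) :
    (p * infNorm W ^ 2 * infNorm Λ - ν) • 1 ≤ p • (Wᵀ * Λ * W) - ν • 1 := by
  have hconj : (infNorm Λ * infNorm W ^ 2) • 1 ≤ Wᵀ * Λ * W :=
    mul_smul_one_le_conjTranspose_mul_mul (infNorm_nonneg Λ) (infNorm_smul_one_le hΛ)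
      (infNorm_sq_smul_one_le_transpose_mul_self W)
  calc (p * infNorm W ^ 2 * infNorm Λ - ν) • (1 : Matrix (Fin d) (Fin d) ℝ)
      = p • (infNorm Λ * infNorm W ^ 2) • 1 - ν • 1 := by module
    _ ≤ p • (Wᵀ * Λ * W) - ν • 1 := by gcongr

end InfimumNorm

/-- If ½ + |m|·‖Λ‖₂·‖W‖₂ ≤ p·‖W‖ᵢ²·‖Λ‖ᵢ − ν for a symmetric positive semidefinite Λ and
p > 0, then p·WᵀΛW − νI is positive definite and ‖(p·WᵀΛW − νI)⁻¹(½Iᵀ − mWᵀΛ)‖₂ ≤ 1. -/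
theorem claim4_offdiag_bound
    {n d : ℕ} (Λ : Matrix (Fin n) (Fin n) ℝ) (hΛ : Λ.PosSemidef)
    (W : Matrix (Fin n) (Fin d) ℝ) (p ν m : ℝ) (hp : 0 < p)
    (h : 1 / 2 + |m| * spNorm Λ * spNorm W ≤ p * infNorm W ^ 2 * infNorm Λ - ν) :
    (p • (Wᵀ * Λ * W) - ν • (1 : Matrix (Fin d) (Fin d) ℝ)).PosDef ∧
      spNorm ((p • (Wᵀ * Λ * W) - ν • (1 : Matrix (Fin d) (Fin d) ℝ))⁻¹ *
        ((1 / 2 : ℝ) • (rectId n d)ᵀ - m • (Wᵀ * Λ))) ≤ 1 := by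
  set K := 1 / 2 + |m| * spNorm Λ * spNorm W with hK
  set M := p • (Wᵀ * Λ * W) - ν • (1 : Matrix (Fin d) (Fin d) ℝ)
  set N := (1 / 2 : ℝ) • (rectId n d)ᵀ - m • (Wᵀ * Λ)
  simp only [spNorm_eq_l2_opNorm] at hK ⊢
  have hK_pos : 0 < K := by rw [hK]; positivity
  have hM : K • 1 ≤ M :=
    (smul_le_smul_of_nonneg_right h zero_le_one).trans
      (smul_one_le_smul_transpose_mul_mul_sub hΛ W hp.le ν)
  have hN : ‖N‖ ≤ K := by
    simpa [N, hK] using l2_opNorm_smul_rectId_sub_le Λ W (1 / 2) m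
  refine ⟨posDef_of_smul_one_le hK_pos hM, ?_⟩
  calc ‖M⁻¹ * N‖ ≤ ‖M⁻¹‖ * ‖N‖ := l2_opNorm_mul _ _
    _ ≤ K⁻¹ * K := by gcongr; exact l2_opNorm_inv_le_inv hK_pos hM
    _ = 1 := inv_mul_cancel₀ hK_pos.ne'
end

section
/- Let f : ℝ^n → ℝ^m be incrementally (Q,S,R)-dissipative with Q = −δI, S = (1/2)I, R = −νI, where δ > 0 and 4δν ≤ 1. Then for all x, d ∈ ℝ^n, ‖f(x + d) − f(x)‖₂ ≤ γ·‖d‖₂ with γ = (1 + √(1 − 4δν))/(2δ). In particular, an incrementally output strictly passive neural network shifts its output by at most a bounded amount under any norm-bounded adversarial input perturbation. -/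
open Matrix BigOperators

/-- `rdot x y = xᵀ Ĩ y` where Ĩ is the rectangular identity block, i.e. the
Euclidean pairing of `x` and `y` on their common coordinates. -/
def rdot {a b : ℕ} (x : Fin a → ℝ) (y : Fin b → ℝ) : ℝ :=
  ∑ i : Fin a, ∑ j : Fin b, if (i : ℕ) = (j : ℕ) then x i * y j else 0

/-!
Cauchy–Schwarz turns dissipativity into the scalar inequality `δ a² - a b + ν b² ≤ 0` between the
output shift `a` and the input shift `b`. Hence `a / b` is at most the larger root
`(1 + √(1 - 4 δ ν)) / (2 δ)` of `δ t² - t + ν`.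
-/

theorem le_larger_root_mul_of_quadratic_nonneg {δ ν a b : ℝ} (hδ : 0 < δ) (hb : 0 ≤ b)
    (hab : 0 ≤ -δ * a ^ 2 + b * a - ν * b ^ 2) :
    a ≤ (1 + √(1 - 4 * δ * ν)) / (2 * δ) * b := by
  -- If `1 < 4 δ ν`, the square root has the junk value `0` and this inequality forces `a = b = 0`.
  have complete_square : (2 * δ * a - b) ^ 2 ≤ (1 - 4 * δ * ν) * b ^ 2 := by
    linarith [mul_nonneg (mul_nonneg zero_le_four hδ.le) hab]
  have root_bound : 2 * δ * a - b ≤ √(1 - 4 * δ * ν) * b :=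
    calc
      2 * δ * a - b ≤ √((1 - 4 * δ * ν) * b ^ 2) := Real.le_sqrt_of_sq_le complete_square
      _ = √(1 - 4 * δ * ν) * b := by rw [Real.sqrt_mul' _ (sq_nonneg b), Real.sqrt_sq hb]
  rw [div_mul_eq_mul_div, le_div_iff₀ (by positivity)]
  linarith

section PartialMatching

variable {α ι κ : Type*} [Fintype ι] [Fintype κ] {s : Finset α} {e : α → ι} {g : α → κ}

theorem sqrt_sum_sq_comp_le_norm (he : Set.InjOn e s) (x : EuclideanSpace ℝ ι) :
    √(∑ p ∈ s, x (e p) ^ 2) ≤ ‖x‖ := by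
  classical
  rw [EuclideanSpace.norm_eq, ← Finset.sum_image (f := fun i => x i ^ 2) he]
  simp only [Real.norm_eq_abs, sq_abs]
  exact Real.sqrt_le_sqrt (Finset.sum_le_univ_sum_of_nonneg fun i => sq_nonneg (x i))

theorem sum_comp_mul_comp_le_norm_mul_norm (he : Set.InjOn e s) (hg : Set.InjOn g s)
    (x : EuclideanSpace ℝ ι) (y : EuclideanSpace ℝ κ) :
    ∑ p ∈ s, x (e p) * y (g p) ≤ ‖x‖ * ‖y‖ :=
  calc
    ∑ p ∈ s, x (e p) * y (g p) ≤ √(∑ p ∈ s, x (e p) ^ 2) * √(∑ p ∈ s, y (g p) ^ 2) :=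
      Real.sum_mul_le_sqrt_mul_sqrt s _ _
    _ ≤ ‖x‖ * ‖y‖ :=
      mul_le_mul (sqrt_sum_sq_comp_le_norm he x) (sqrt_sum_sq_comp_le_norm hg y)
        (Real.sqrt_nonneg _) (norm_nonneg x)

end PartialMatching

theorem dotProduct_self_eq_norm_sq {ι : Type*} [Fintype ι] (v : ι → ℝ) :
    v ⬝ᵥ v = ‖WithLp.toLp 2 v‖ ^ 2 := by
  simp only [dotProduct, EuclideanSpace.real_norm_sq_eq, ← sq]

theorem vnorm_eq_norm {k : ℕ} (v : Fin k → ℝ) : vnorm v = ‖WithLp.toLp 2 v‖ := by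
  rw [vnorm, dotProduct_self_eq_norm_sq, Real.sqrt_sq (norm_nonneg _)]

theorem rdot_le_norm_mul_norm {a b : ℕ} (x : EuclideanSpace ℝ (Fin a))
    (y : EuclideanSpace ℝ (Fin b)) : rdot x y ≤ ‖x‖ * ‖y‖ := by
  let diagonal : Finset (Fin a × Fin b) := {p | (p.1 : ℕ) = p.2}
  have rdot_eq_sum_diagonal : rdot x y = ∑ p ∈ diagonal, x p.1 * y p.2 := by
    rw [Finset.sum_filter, Fintype.sum_prod_type, rdot]
  have fst_injOn : Set.InjOn Prod.fst (diagonal : Set (Fin a × Fin b)) := by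
    grind [Set.InjOn]
  have snd_injOn : Set.InjOn Prod.snd (diagonal : Set (Fin a × Fin b)) := by
    grind [Set.InjOn]
  rw [rdot_eq_sum_diagonal]
  exact sum_comp_mul_comp_le_norm_mul_norm fst_injOn snd_injOn x y

theorem incrementally_dissipative_implies_gain_bound_general
    {E F : Type*} [SeminormedAddCommGroup E] [SeminormedAddCommGroup F]
    (S : E → F → ℝ) (hS : ∀ u v, S u v ≤ ‖u‖ * ‖v‖) (f : E → F) (δ ν : ℝ) (hδ : 0 < δ)
    (hdiss : ∀ x₁ x₂ : E,
      0 ≤ -δ * ‖f x₁ - f x₂‖ ^ 2 + S (x₁ - x₂) (f x₁ - f x₂) - ν * ‖x₁ - x₂‖ ^ 2) :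
    ∀ x d : E, ‖f (x + d) - f x‖ ≤ (1 + √(1 - 4 * δ * ν)) / (2 * δ) * ‖d‖ := by
  intro x d
  refine le_larger_root_mul_of_quadratic_nonneg hδ (norm_nonneg d) ?_
  have dissipation := hdiss (x + d) x
  rw [add_sub_cancel_left] at dissipation
  linarith [hS d (f (x + d) - f x)]

/-- An incrementally (−δI, ½I, −νI)-dissipative map with δ > 0 has its output shift
bounded by γ = (1 + √(1 − 4δν))/(2δ) times the input perturbation:
‖f(x + d) − f(x)‖₂ ≤ γ‖d‖₂. -/
theorem incrementally_dissipative_implies_gain_bound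
    {n m : ℕ} (f : (Fin n → ℝ) → (Fin m → ℝ)) (δ ν : ℝ)
    (hδ : 0 < δ) (h4 : 4 * δ * ν ≤ 1)
    (hdiss : ∀ x₁ x₂ : Fin n → ℝ,
      0 ≤ -δ * ((f x₁ - f x₂) ⬝ᵥ (f x₁ - f x₂))
          + rdot (x₁ - x₂) (f x₁ - f x₂)
          - ν * ((x₁ - x₂) ⬝ᵥ (x₁ - x₂))) :
    ∀ x d : Fin n → ℝ,
      vnorm (f (x + d) - f x) ≤ (1 + Real.sqrt (1 - 4 * δ * ν)) / (2 * δ) * vnorm d := by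
  simp only [dotProduct_self_eq_norm_sq, vnorm_eq_norm, WithLp.toLp_sub] at hdiss ⊢
  exact fun x d => incrementally_dissipative_implies_gain_bound_general
    (E := EuclideanSpace ℝ (Fin n)) (F := EuclideanSpace ℝ (Fin m)) (fun u v => rdot u v)
    rdot_le_norm_mul_norm (fun u => WithLp.toLp 2 (f u)) δ ν hδ
    (fun x₁ x₂ => hdiss x₁ x₂) (WithLp.toLp 2 x) (WithLp.toLp 2 d)
end
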